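/- arXiv:1401.0903 — 2 statements merged into one kernel-verified Lean document; each statement's English description precedes it below -/
import Mathlib

section
/- Let Φ₁ and Φ₂ be two Hawkes kernel matrices, each satisfying hypothesis (H), let Σ be a diagonal D×D matrix with strictly positive diagonal entries, and let g₁ and g₂ be the conditional-expectation matrices associated with (Φ₁, Σ) and (Φ₂, Σ) respectively. If g₁(t) = g₂(t) for almost every t ∈ ℝ, then Φ₁(t) = Φ₂(t) for almost every t ∈ ℝ. That is, the kernel matrix of a stationary Hawkes process is uniquely determined by its second-order statistics (its conditional-expectation matrix) together with its mean intensity matrix Σ. -/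
open MeasureTheory Matrix Filter Set

/-- Entrywise matrix convolution:
`(A ⋆ B)^{ij}(t) = ∑_{k} ∫ A^{ik}(s) B^{kj}(t - s) ds`. -/
noncomputable def mconv (D : ℕ) (A B : ℝ → Matrix (Fin D) (Fin D) ℝ) :
    ℝ → Matrix (Fin D) (Fin D) ℝ :=
  fun t => Matrix.of fun i j => ∑ k : Fin D, ∫ s : ℝ, A s i k * B (t - s) k j

/-- `mconvIter D Φ k` is the `(k+1)`-fold matrix convolution `Φ^{⋆(k+1)}`. -/
noncomputable def mconvIter (D : ℕ) (Φ : ℝ → Matrix (Fin D) (Fin D) ℝ) :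
    ℕ → ℝ → Matrix (Fin D) (Fin D) ℝ
  | 0 => Φ
  | (k + 1) => mconv D Φ (mconvIter D Φ k)

/-- `Ψ = ∑_{k=1}^∞ Φ^{⋆k}`, defined entrywise as a pointwise sum. -/
noncomputable def hawkesPsi (D : ℕ) (Φ : ℝ → Matrix (Fin D) (Fin D) ℝ) :
    ℝ → Matrix (Fin D) (Fin D) ℝ :=
  fun t => Matrix.of fun i j => ∑' k : ℕ, mconvIter D Φ k t i j

/-- The matrix `‖Φ‖` of `L¹` norms: `‖Φ‖^{ij} = ∫ φ^{ij}(t) dt` (entries nonnegative). -/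
noncomputable def kernelNorm (D : ℕ) (Φ : ℝ → Matrix (Fin D) (Fin D) ℝ) :
    Matrix (Fin D) (Fin D) ℝ :=
  Matrix.of fun i j => ∫ t : ℝ, Φ t i j

/-- A Hawkes kernel matrix: measurable, nonnegative, integrable and causal entries. -/
def IsHawkesKernel (D : ℕ) (Φ : ℝ → Matrix (Fin D) (Fin D) ℝ) : Prop :=
  (∀ i j, Measurable fun t => Φ t i j) ∧
  (∀ t, ∀ i j, 0 ≤ Φ t i j) ∧
  (∀ i j, Integrable fun t => Φ t i j) ∧
  (∀ t < (0 : ℝ), Φ t = 0)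

/-- Hypothesis (H): the spectral radius of `‖Φ‖` is strictly smaller than 1. -/
def HypothesisH (D : ℕ) (Φ : ℝ → Matrix (Fin D) (Fin D) ℝ) : Prop :=
  spectralRadius ℂ ((kernelNorm D Φ).map Complex.ofReal) < 1

/-- `q(t) = Σ Ψ(-t)ᵀ Σ⁻¹`. -/
noncomputable def hawkesQ (D : ℕ) (Φ : ℝ → Matrix (Fin D) (Fin D) ℝ)
    (S : Matrix (Fin D) (Fin D) ℝ) : ℝ → Matrix (Fin D) (Fin D) ℝ :=
  fun t => S * (hawkesPsi D Φ (-t))ᵀ * S⁻¹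

/-- The conditional-expectation matrix
`g(t) = Ψ(t) + Σ Ψ(-t)ᵀ Σ⁻¹ + (Ψ ⋆ q)(t)`. -/
noncomputable def hawkesG (D : ℕ) (Φ : ℝ → Matrix (Fin D) (Fin D) ℝ)
    (S : Matrix (Fin D) (Fin D) ℝ) : ℝ → Matrix (Fin D) (Fin D) ℝ :=
  fun t => hawkesPsi D Φ t + hawkesQ D Φ S t +
    mconv D (hawkesPsi D Φ) (hawkesQ D Φ S) t

/-- Entrywise Laplace transform `F̂(z) = ∫ F(t) e^{zt} dt`. -/
noncomputable def mlaplace (D : ℕ) (F : ℝ → Matrix (Fin D) (Fin D) ℝ) (z : ℂ) :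
    Matrix (Fin D) (Fin D) ℂ :=
  Matrix.of fun i j => ∫ t : ℝ, (F t i j : ℂ) * Complex.exp (z * t)


/-- Scalar Fourier transform. -/
noncomputable def hft (f : ℝ → ℝ) (w : ℝ) : ℂ :=
  ∫ t : ℝ, (f t : ℂ) * Complex.exp (w * t * Complex.I)

theorem hft_norm_exp (w t : ℝ) : ‖Complex.exp (w * t * Complex.I)‖ = 1 := by
  have := Complex.norm_exp_ofReal_mul_I (w * t)
  simpa using this

theorem hft_integrable {f : ℝ → ℝ} (hf : Integrable f) (w : ℝ) :
    Integrable fun t : ℝ => (f t : ℂ) * Complex.exp (w * t * Complex.I) := by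
  refine (hf.ofReal (𝕜 := ℂ)).mul_bdd (c := 1) ?_ ?_
  · exact Continuous.aestronglyMeasurable (by fun_prop)
  · exact Eventually.of_forall fun t => (hft_norm_exp w t).le

theorem hft_add {f g : ℝ → ℝ} (hf : Integrable f) (hg : Integrable g) (w : ℝ) :
    hft (fun t => f t + g t) w = hft f w + hft g w := by
  unfold hft
  rw [← integral_add (hft_integrable hf w) (hft_integrable hg w)]
  congr 1; ext t; push_cast; ring

theorem hft_sub {f g : ℝ → ℝ} (hf : Integrable f) (hg : Integrable g) (w : ℝ) :
    hft (fun t => f t - g t) w = hft f w - hft g w := by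
  unfold hft
  rw [← integral_sub (hft_integrable hf w) (hft_integrable hg w)]
  congr 1; ext t; push_cast; ring

theorem hft_congr {f g : ℝ → ℝ} (h : f =ᵐ[volume] g) (w : ℝ) : hft f w = hft g w := by
  unfold hft
  apply integral_congr_ae
  filter_upwards [h] with t ht
  rw [ht]

theorem hft_inj_nonneg {f g : ℝ → ℝ} (hf : Integrable f) (hg : Integrable g)
    (hf0 : ∀ t, 0 ≤ f t) (hg0 : ∀ t, 0 ≤ g t) (h : ∀ w, hft f w = hft g w) :
    f =ᵐ[volume] g := by
  have key : ∀ {u : ℝ → ℝ}, Integrable u → (∀ t, 0 ≤ u t) → ∀ w,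
      charFun (volume.withDensity fun t => ENNReal.ofReal (u t)) w = hft u w := by
    intro u hu hu0 w
    rw [charFun_apply_real, integral_withDensity_eq_integral_toReal_smul₀
      hu.aestronglyMeasurable.aemeasurable.ennreal_ofReal
      (Eventually.of_forall fun t => ENNReal.ofReal_lt_top)]
    unfold hft
    congr 1; ext t
    rw [ENNReal.toReal_ofReal (hu0 t)]
    simp
  have := isFiniteMeasure_withDensity_ofReal hf.2
  have := isFiniteMeasure_withDensity_ofReal hg.2
  have e : volume.withDensity (fun t => ENNReal.ofReal (f t)) =
      volume.withDensity (fun t => ENNReal.ofReal (g t)) := by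
    apply Measure.ext_of_charFun
    ext w
    rw [key hf hf0, key hg hg0, h]
  rw [withDensity_eq_iff_of_sigmaFinite hf.aestronglyMeasurable.aemeasurable.ennreal_ofReal
    hg.aestronglyMeasurable.aemeasurable.ennreal_ofReal] at e
  filter_upwards [e] with t ht
  exact (ENNReal.ofReal_eq_ofReal_iff (hf0 t) (hg0 t)).1 ht

theorem hft_inj {f g : ℝ → ℝ} (hf : Integrable f) (hg : Integrable g)
    (h : ∀ w, hft f w = hft g w) : f =ᵐ[volume] g := by
  have key : (fun t => max (f t) 0 + max (-g t) 0) =ᵐ[volume]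
      (fun t => max (g t) 0 + max (-f t) 0) := by
    have h1 : Integrable (fun t => max (f t) 0) := hf.pos_part
    have h2 : Integrable (fun t => max (g t) 0) := hg.pos_part
    have h3 : Integrable (fun t => max (-f t) 0) := hf.neg_part
    have h4 : Integrable (fun t => max (-g t) 0) := hg.neg_part
    refine hft_inj_nonneg (h1.add h4) (h2.add h3) (fun t => by positivity) (fun t => by positivity)
      fun w => ?_
    have e1 := hft_sub h1 h3 w
    have e2 := hft_sub h2 h4 w
    simp only [max_zero_sub_eq_self] at e1 e2
    rw [hft_add h1 h4, hft_add h2 h3]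
    have := h w
    linear_combination this - e1 + e2
  filter_upwards [key] with t ht
  have e1 := max_zero_sub_eq_self (f t)
  have e2 := max_zero_sub_eq_self (g t)
  linarith

theorem hft_neg (f : ℝ → ℝ) (w : ℝ) : hft (fun t => f (-t)) w = hft f (-w) := by
  unfold hft
  rw [← integral_neg_eq_self]
  congr 1; ext t; push_cast; congr 2 <;> simp

theorem hft_const_mul (c : ℝ) (f : ℝ → ℝ) (w : ℝ) : hft (fun t => c * f t) w = c * hft f w := by
  unfold hft
  rw [← integral_const_mul]
  congr 1; ext t; push_cast; ring

theorem hconv_eq (f g : ℝ → ℝ) :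
    (fun t => ∫ s, f s * g (t - s)) = convolution f g (ContinuousLinearMap.mul ℝ ℝ) volume := by
  ext t; simp [convolution]

theorem hconv_integrable {f g : ℝ → ℝ} (hf : Integrable f) (hg : Integrable g) :
    Integrable fun t => ∫ s, f s * g (t - s) := by
  rw [hconv_eq]
  exact hf.integrable_convolution _ hg

theorem hconv_integral {f g : ℝ → ℝ} (hf : Integrable f) (hg : Integrable g) :
    ∫ t, ∫ s, f s * g (t - s) = (∫ t, f t) * ∫ t, g t := by
  have := integral_convolution (ContinuousLinearMap.mul ℝ ℝ) hf hg
  rw [← hconv_eq] at this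
  simpa using this

theorem hft_conv {f g : ℝ → ℝ} (hf : Integrable f) (hg : Integrable g) (w : ℝ) :
    hft (fun t => ∫ s, f s * g (t - s)) w = hft f w * hft g w := by
  have := integral_convolution (ContinuousLinearMap.mul ℝ ℂ) (hft_integrable hf w)
    (hft_integrable hg w)
  simp only [ContinuousLinearMap.mul_apply'] at this
  unfold hft
  rw [← this]
  congr 1; ext t
  rw [← integral_complex_ofReal, ← integral_mul_const, convolution]
  congr 1; ext s
  simp only [ContinuousLinearMap.mul_apply']
  have : Complex.exp (w * t * Complex.I) =
      Complex.exp (w * s * Complex.I) * Complex.exp (w * (t - s : ℝ) * Complex.I) := by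
    rw [← Complex.exp_add]; congr 1; push_cast; ring
  rw [this]; push_cast; ring

theorem hft_sum {ι : Type*} (s : Finset ι) (f : ι → ℝ → ℝ) (hf : ∀ i ∈ s, Integrable (f i))
    (w : ℝ) : hft (fun t => ∑ i ∈ s, f i t) w = ∑ i ∈ s, hft (f i) w := by
  unfold hft
  rw [← integral_finsetSum _ (fun i hi => hft_integrable (hf i hi) w)]
  congr 1; ext t; push_cast; rw [Finset.sum_mul]

theorem htsum_integrable {f : ℕ → ℝ → ℝ} (hf : ∀ k, Integrable (f k)) (h0 : ∀ k t, 0 ≤ f k t)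
    (hs : Summable fun k => ∫ t, f k t) : Integrable fun t => ∑' k, f k t := by
  have e : (fun t => ∑' k, f k t) = fun t => (∑' k, ENNReal.ofReal (f k t)).toReal := by
    ext t
    rw [ENNReal.tsum_toReal_eq (fun k => ENNReal.ofReal_ne_top)]
    congr 1; ext k; rw [ENNReal.toReal_ofReal (h0 k t)]
  rw [e]
  have hm : ∀ k, AEMeasurable (fun t => ENNReal.ofReal (f k t)) :=
    fun k => (hf k).aestronglyMeasurable.aemeasurable.ennreal_ofReal
  apply integrable_toReal_of_lintegral_ne_top (AEMeasurable.tsum hm)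
  rw [lintegral_tsum hm]
  have : ∀ k, ∫⁻ t, ENNReal.ofReal (f k t) = ENNReal.ofReal (∫ t, f k t) := fun k =>
    (ofReal_integral_eq_lintegral_ofReal (hf k) (Eventually.of_forall (h0 k))).symm
  simp only [this]
  exact hs.tsum_ofReal_ne_top

theorem hft_hasSum {f : ℕ → ℝ → ℝ} (hf : ∀ k, Integrable (f k)) (h0 : ∀ k t, 0 ≤ f k t)
    (hs : Summable fun k => ∫ t, f k t) (w : ℝ) :
    HasSum (fun k => hft (f k) w) (hft (fun t => ∑' k, f k t) w) := by
  have := hasSum_integral_of_summable_integral_norm (fun k => hft_integrable (hf k) w) (by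
    simpa [hft_norm_exp, abs_of_nonneg (h0 _ _)] using hs)
  have e : hft (fun t => ∑' k, f k t) w =
      ∫ t : ℝ, ∑' k, (f k t : ℂ) * Complex.exp (w * t * Complex.I) := by
    unfold hft
    congr 1; ext t
    rw [tsum_mul_right, Complex.ofReal_tsum]
  rw [e]
  exact this

section
attribute [local instance] Matrix.linftyOpNormedRing Matrix.linftyOpNormedAlgebra

theorem hsummable_pow {D : ℕ} (a : Matrix (Fin D) (Fin D) ℂ) (h : spectralRadius ℂ a < 1)
    (i j : Fin D) : Summable fun k => (a ^ k) i j := by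
  have : CompleteSpace (Matrix (Fin D) (Fin D) ℂ) := FiniteDimensional.complete ℂ _
  obtain ⟨r, hr1, hr2⟩ := ENNReal.lt_iff_exists_nnreal_btwn.1 h
  have hr2' : (r : ℝ) < 1 := by exact_mod_cast hr2
  have hs : Summable fun k => a ^ k := by
    have g := (spectrum.pow_nnnorm_pow_one_div_tendsto_nhds_spectralRadius a).eventually_lt_const hr1
    refine Summable.of_norm_bounded_eventually_nat (g := fun k => (r : ℝ) ^ k)
      (summable_geometric_of_lt_one r.2 hr2') ?_
    filter_upwards [g, eventually_gt_atTop 0] with n hn hn0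
    have hn' : (0 : ℝ) < n := by exact_mod_cast hn0
    have := ENNReal.rpow_le_rpow hn.le hn'.le
    rw [← ENNReal.rpow_mul, one_div, inv_mul_cancel₀ hn'.ne', ENNReal.rpow_one,
      ENNReal.rpow_natCast] at this
    exact_mod_cast this
  have h1 := Pi.summable.1 hs i
  exact Pi.summable.1 h1 j
end

/-- Entrywise integrability. -/
def MInt (D : ℕ) (A : ℝ → Matrix (Fin D) (Fin D) ℝ) : Prop :=
  ∀ i j, Integrable fun t => A t i j

/-- Entrywise Fourier transform. -/
noncomputable def mft (D : ℕ) (A : ℝ → Matrix (Fin D) (Fin D) ℝ) (w : ℝ) :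
    Matrix (Fin D) (Fin D) ℂ :=
  Matrix.of fun i j => hft (fun t => A t i j) w

section
variable {D : ℕ} {A B : ℝ → Matrix (Fin D) (Fin D) ℝ}

theorem MInt.add (hA : MInt D A) (hB : MInt D B) : MInt D (fun t => A t + B t) :=
  fun i j => (hA i j).add (hB i j)

theorem MInt.sub (hA : MInt D A) (hB : MInt D B) : MInt D (fun t => A t - B t) :=
  fun i j => (hA i j).sub (hB i j)

theorem MInt.mconv (hA : MInt D A) (hB : MInt D B) : MInt D (mconv D A B) := by
  intro i j
  simp only [_root_.mconv, Matrix.of_apply]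
  exact integrable_finsetSum _ fun k _ => hconv_integrable (hA i k) (hB k j)

theorem mft_add (hA : MInt D A) (hB : MInt D B) (w : ℝ) :
    mft D (fun t => A t + B t) w = mft D A w + mft D B w := by
  ext i j
  exact hft_add (hA i j) (hB i j) w

theorem mft_sub (hA : MInt D A) (hB : MInt D B) (w : ℝ) :
    mft D (fun t => A t - B t) w = mft D A w - mft D B w := by
  ext i j
  exact hft_sub (hA i j) (hB i j) w

theorem mft_mconv (hA : MInt D A) (hB : MInt D B) (w : ℝ) :
    mft D (mconv D A B) w = mft D A w * mft D B w := by
  ext i j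
  simp only [mft, mconv, Matrix.of_apply, Matrix.mul_apply]
  rw [hft_sum _ _ fun k _ => hconv_integrable (hA i k) (hB k j)]
  exact Finset.sum_congr rfl fun k _ => hft_conv (hA i k) (hB k j) w

theorem kernelNorm_mconv (hA : MInt D A) (hB : MInt D B) :
    kernelNorm D (mconv D A B) = kernelNorm D A * kernelNorm D B := by
  ext i j
  simp only [kernelNorm, mconv, Matrix.of_apply, Matrix.mul_apply]
  rw [integral_finsetSum _ fun k _ => hconv_integrable (hA i k) (hB k j)]
  exact Finset.sum_congr rfl fun k _ => hconv_integral (hA i k) (hB k j)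

theorem mft_congr (h : ∀ᵐ t : ℝ, A t = B t) (w : ℝ) : mft D A w = mft D B w := by
  ext i j
  exact hft_congr (by filter_upwards [h] with t ht; rw [ht]) w

theorem mft_inj (hA : MInt D A) (hB : MInt D B) (h : ∀ w, mft D A w = mft D B w) :
    ∀ᵐ t : ℝ, A t = B t := by
  have : ∀ i j, ∀ᵐ t : ℝ, A t i j = B t i j := fun i j =>
    hft_inj (hA i j) (hB i j) fun w => congrFun (congrFun (h w) i) j
  have h2 : ∀ᵐ t : ℝ, ∀ i j, A t i j = B t i j := by
    rw [ae_all_iff]; intro i; rw [ae_all_iff]; exact this i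
  filter_upwards [h2] with t ht
  ext i j; exact ht i j

theorem mconv_causal (hA : ∀ t < (0 : ℝ), A t = 0) (hB : ∀ t < (0 : ℝ), B t = 0) :
    ∀ t < (0 : ℝ), mconv D A B t = 0 := by
  intro t ht
  ext i j
  simp only [mconv, Matrix.of_apply, Matrix.zero_apply]
  refine Finset.sum_eq_zero fun k _ => ?_
  refine integral_eq_zero_of_ae (Eventually.of_forall fun s => ?_)
  rcases lt_or_ge s 0 with hs | hs
  · simp [hA s hs]
  · simp [hB (t - s) (by linarith)]

theorem mconv_anticausal (hA : ∀ t > (0 : ℝ), A t = 0) (hB : ∀ t > (0 : ℝ), B t = 0) :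
    ∀ t > (0 : ℝ), mconv D A B t = 0 := by
  intro t ht
  ext i j
  simp only [mconv, Matrix.of_apply, Matrix.zero_apply]
  refine Finset.sum_eq_zero fun k _ => ?_
  refine integral_eq_zero_of_ae (Eventually.of_forall fun s => ?_)
  rcases lt_or_ge 0 s with hs | hs
  · simp [hA s hs]
  · simp [hB (t - s) (by linarith)]

/-- The reflection `t ↦ Σ A(-t)ᵀ Σ⁻¹`. -/
noncomputable def mrefl (D : ℕ) (S : Matrix (Fin D) (Fin D) ℝ)
    (A : ℝ → Matrix (Fin D) (Fin D) ℝ) : ℝ → Matrix (Fin D) (Fin D) ℝ :=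
  fun t => S * (A (-t))ᵀ * S⁻¹

theorem mrefl_anticausal (S : Matrix (Fin D) (Fin D) ℝ) (hA : ∀ t < (0 : ℝ), A t = 0) :
    ∀ t > (0 : ℝ), mrefl D S A t = 0 := by
  intro t ht
  simp [mrefl, hA (-t) (by linarith)]

theorem mrefl_apply (d : Fin D → ℝ) (hd : ∀ i, 0 < d i) (t : ℝ) (i j : Fin D) :
    mrefl D (Matrix.diagonal d) A t i j = (d i * (d j)⁻¹) * A (-t) j i := by
  have hinv : (Matrix.diagonal d)⁻¹ = Matrix.diagonal fun i => (d i)⁻¹ := by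
    apply Matrix.inv_eq_right_inv
    rw [Matrix.diagonal_mul_diagonal, ← Matrix.diagonal_one]
    congr 1; ext i; exact mul_inv_cancel₀ (hd i).ne'
  rw [mrefl, hinv, Matrix.mul_diagonal, Matrix.diagonal_mul, Matrix.transpose_apply]
  ring

theorem MInt.mrefl (d : Fin D → ℝ) (hd : ∀ i, 0 < d i) (hA : MInt D A) :
    MInt D (mrefl D (Matrix.diagonal d) A) := by
  intro i j
  simp only [mrefl_apply d hd]
  exact (hA j i).comp_neg.const_mul _

theorem mft_mrefl (d : Fin D → ℝ) (hd : ∀ i, 0 < d i) (w : ℝ) :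
    mft D (mrefl D (Matrix.diagonal d) A) w =
      Matrix.diagonal (fun i => (d i : ℂ)) * (mft D A (-w))ᵀ *
        Matrix.diagonal (fun i => (d i : ℂ)⁻¹) := by
  ext i j
  rw [Matrix.mul_diagonal, Matrix.diagonal_mul, Matrix.transpose_apply]
  simp only [mft, Matrix.of_apply, mrefl_apply d hd]
  rw [hft_const_mul, hft_neg (fun t => A t j i)]
  push_cast; ring

end

section
variable {D : ℕ} {Φ : ℝ → Matrix (Fin D) (Fin D) ℝ}

theorem mconvIter_int (h : MInt D Φ) (k : ℕ) : MInt D (mconvIter D Φ k) := by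
  induction k with
  | zero => exact h
  | succ k ih => exact h.mconv ih

theorem mconvIter_nonneg (h : ∀ t, ∀ i j, 0 ≤ Φ t i j) (k : ℕ) :
    ∀ t i j, 0 ≤ mconvIter D Φ k t i j := by
  induction k with
  | zero => exact h
  | succ k ih =>
    intro t i j
    simp only [mconvIter, mconv, Matrix.of_apply]
    exact Finset.sum_nonneg fun k _ => integral_nonneg fun s => mul_nonneg (h _ _ _) (ih _ _ _)

theorem mconvIter_causal (h : ∀ t < (0 : ℝ), Φ t = 0) (k : ℕ) :
    ∀ t < (0 : ℝ), mconvIter D Φ k t = 0 := by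
  induction k with
  | zero => exact h
  | succ k ih => exact mconv_causal h ih

theorem mconvIter_norm (h : MInt D Φ) (k : ℕ) :
    kernelNorm D (mconvIter D Φ k) = kernelNorm D Φ ^ (k + 1) := by
  induction k with
  | zero => simp [mconvIter]
  | succ k ih =>
    rw [mconvIter, kernelNorm_mconv h (mconvIter_int h k), ih, pow_succ' _ (k + 1)]

theorem mconvIter_summable (h : MInt D Φ) (hH : HypothesisH D Φ) (i j : Fin D) :
    Summable fun k => ∫ t, mconvIter D Φ k t i j := by
  have h1 := (summable_nat_add_iff 1).2 (hsummable_pow _ hH i j)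
  have h2 : ∀ k, (((kernelNorm D Φ).map Complex.ofReal) ^ (k + 1)) i j =
      ((∫ t, mconvIter D Φ k t i j : ℝ) : ℂ) := by
    intro k
    have e : (kernelNorm D Φ).map Complex.ofReal =
      Complex.ofRealHom.mapMatrix (kernelNorm D Φ) := rfl
    rw [e, ← map_pow, ← mconvIter_norm h k]
    rfl
  simp only [h2] at h1
  exact Complex.summable_ofReal.1 h1

theorem hawkesPsi_causal (h : ∀ t < (0 : ℝ), Φ t = 0) :
    ∀ t < (0 : ℝ), hawkesPsi D Φ t = 0 := by
  intro t ht
  ext i j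
  simp [hawkesPsi, mconvIter_causal h _ t ht]

theorem hawkesPsi_int (h : IsHawkesKernel D Φ) (hH : HypothesisH D Φ) :
    MInt D (hawkesPsi D Φ) := by
  intro i j
  simp only [hawkesPsi, Matrix.of_apply]
  exact htsum_integrable (fun k => mconvIter_int h.2.2.1 k i j)
    (fun k t => mconvIter_nonneg h.2.1 k t i j) (mconvIter_summable h.2.2.1 hH i j)

theorem hawkesPsi_mft (h : IsHawkesKernel D Φ) (hH : HypothesisH D Φ) (w : ℝ) :
    (1 - mft D Φ w) * (1 + mft D (hawkesPsi D Φ) w) = 1 := by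
  have hs : HasSum (fun k => mft D (mconvIter D Φ k) w) (mft D (hawkesPsi D Φ) w) := by
    refine Pi.hasSum.2 fun i => Pi.hasSum.2 fun j => ?_
    exact hft_hasSum (fun k => mconvIter_int h.2.2.1 k i j)
      (fun k t => mconvIter_nonneg h.2.1 k t i j) (mconvIter_summable h.2.2.1 hH i j) w
  have h1 : mft D (hawkesPsi D Φ) w = mft D Φ w + mft D Φ w * mft D (hawkesPsi D Φ) w := by
    have h2 := HasSum.mul_left (mft D Φ w) hs
    have h3 : ∀ k, mft D Φ w * mft D (mconvIter D Φ k) w = mft D (mconvIter D Φ (k + 1)) w :=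
      fun k => (mft_mconv h.2.2.1 (mconvIter_int h.2.2.1 k) w).symm
    simp only [h3] at h2
    have h4 := (hasSum_nat_add_iff (f := fun k => mft D (mconvIter D Φ k) w) 1).1 h2
    have h5 := hs.unique h4
    rw [Finset.sum_range_one] at h5
    rw [add_comm]
    exact h5
  have h6 : (1 - mft D Φ w) * (1 + mft D (hawkesPsi D Φ) w) = 1 + mft D (hawkesPsi D Φ) w -
    (mft D Φ w + mft D Φ w * mft D (hawkesPsi D Φ) w) := by noncomm_ring
  rw [h6, ← h1]; simp

end

theorem hmain_alg {D : ℕ} {F2 P1 P2 Q1 Q2 R1 : Matrix (Fin D) (Fin D) ℂ}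
    (h2 : (1 - F2) * (1 + P2) = 1) (hR : (1 + Q1) * (1 - R1) = 1)
    (hg : P1 + Q1 + P1 * Q1 = P2 + Q2 + P2 * Q2) :
    P1 - F2 - F2 * P1 = Q2 - R1 - Q2 * R1 := by
  have e : (1 + P1) * (1 + Q1) = (1 + P2) * (1 + Q2) := by
    have : 1 + (P1 + Q1 + P1 * Q1) = 1 + (P2 + Q2 + P2 * Q2) := by rw [hg]
    calc _ = 1 + (P1 + Q1 + P1 * Q1) := by noncomm_ring
      _ = _ := this
      _ = _ := by noncomm_ring
  have e2 : (1 - F2) * (1 + P1) = (1 + Q2) * (1 - R1) := by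
    calc (1 - F2) * (1 + P1) = (1 - F2) * (1 + P1) * ((1 + Q1) * (1 - R1)) := by
          rw [hR, mul_one]
      _ = (1 - F2) * ((1 + P1) * (1 + Q1)) * (1 - R1) := by simp only [mul_assoc]
      _ = ((1 - F2) * (1 + P2)) * ((1 + Q2) * (1 - R1)) := by rw [e]; simp only [mul_assoc]
      _ = _ := by rw [h2, one_mul]
  calc _ = (1 - F2) * (1 + P1) - 1 := by noncomm_ring
    _ = (1 + Q2) * (1 - R1) - 1 := by rw [e2]
    _ = _ := by noncomm_ring

/-- A stationary Hawkes process is uniquely determined by its mean intensity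
matrix `Σ` and its conditional-expectation matrix `g`: if two Hawkes kernel matrices satisfying
(H) give rise to the same `g`, they coincide almost everywhere. -/
theorem hawkes_kernel_unique_from_secondOrder (D : ℕ) (hD : 0 < D)
    (Φ₁ Φ₂ : ℝ → Matrix (Fin D) (Fin D) ℝ)
    (hΦ₁ : IsHawkesKernel D Φ₁) (hH₁ : HypothesisH D Φ₁)
    (hΦ₂ : IsHawkesKernel D Φ₂) (hH₂ : HypothesisH D Φ₂)
    (S : Matrix (Fin D) (Fin D) ℝ) (hSdiag : S.IsDiag) (hSpos : ∀ i, 0 < S i i)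
    (hg : ∀ᵐ t : ℝ, hawkesG D Φ₁ S t = hawkesG D Φ₂ S t) :
    ∀ᵐ t : ℝ, Φ₁ t = Φ₂ t := by
  obtain ⟨d, rfl⟩ : ∃ d, S = Matrix.diagonal d := ⟨S.diag, hSdiag.diagonal_diag.symm⟩
  have hd : ∀ i, 0 < d i := fun i => by simpa using hSpos i
  have hI1 : MInt D Φ₁ := hΦ₁.2.2.1
  have hI2 : MInt D Φ₂ := hΦ₂.2.2.1
  have hP1 := hawkesPsi_int hΦ₁ hH₁
  have hP2 := hawkesPsi_int hΦ₂ hH₂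
  have hQ1 := hP1.mrefl d hd
  have hQ2 := hP2.mrefl d hd
  have hR1 := hI1.mrefl d hd
  set S := Matrix.diagonal d with hS
  -- transforms of the two conditional-expectation matrices
  have hG : ∀ w, mft D (hawkesPsi D Φ₁) w + mft D (mrefl D S (hawkesPsi D Φ₁)) w +
      mft D (hawkesPsi D Φ₁) w * mft D (mrefl D S (hawkesPsi D Φ₁)) w =
      mft D (hawkesPsi D Φ₂) w + mft D (mrefl D S (hawkesPsi D Φ₂)) w +
      mft D (hawkesPsi D Φ₂) w * mft D (mrefl D S (hawkesPsi D Φ₂)) w := by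
    intro w
    rw [← mft_mconv hP1 hQ1, ← mft_mconv hP2 hQ2, ← mft_add hP1 hQ1, ← mft_add hP2 hQ2,
      ← mft_add (hP1.add hQ1) (hP1.mconv hQ1), ← mft_add (hP2.add hQ2) (hP2.mconv hQ2)]
    exact mft_congr hg w
  have hinv1 := hawkesPsi_mft hΦ₁ hH₁
  have hinv2 := hawkesPsi_mft hΦ₂ hH₂
  -- the reflected inverse relation
  have hR : ∀ w, (1 + mft D (mrefl D S (hawkesPsi D Φ₁)) w) * (1 - mft D (mrefl D S Φ₁) w) = 1 := by
    intro w
    rw [hS, mft_mrefl d hd, mft_mrefl d hd]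
    set U := Matrix.diagonal (fun i => (d i : ℂ)) with hU
    set V := Matrix.diagonal (fun i => (d i : ℂ)⁻¹) with hV
    have hUV : U * V = 1 := by
      rw [hU, hV, Matrix.diagonal_mul_diagonal, ← Matrix.diagonal_one]
      congr 1; ext i
      exact mul_inv_cancel₀ (by exact_mod_cast (hd i).ne')
    have hVU : V * U = 1 := mul_eq_one_comm.1 hUV
    have ht := congrArg Matrix.transpose (hinv1 (-w))
    rw [Matrix.transpose_mul, Matrix.transpose_one, Matrix.transpose_add, Matrix.transpose_sub,
      Matrix.transpose_one] at ht
    generalize (mft D (hawkesPsi D Φ₁) (-w))ᵀ = P at ht ⊢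
    generalize (mft D Φ₁ (-w))ᵀ = F at ht ⊢
    have e1 : 1 + U * P * V = U * (1 + P) * V := by
      rw [mul_add, add_mul, mul_one, hUV]
    have e2 : 1 - U * F * V = U * (1 - F) * V := by
      rw [mul_sub, sub_mul, mul_one, hUV]
    rw [e1, e2]
    calc _ = U * ((1 + P) * (V * U) * (1 - F)) * V := by simp only [mul_assoc]
      _ = 1 := by rw [hVU, mul_one, ht, mul_one, hUV]
  -- causal part equals anticausal part
  have hkey := mft_inj ((hP1.sub hI2).sub (hI2.mconv hP1)) ((hQ2.sub hR1).sub (hQ2.mconv hR1))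
    (fun w => by
      rw [mft_sub (hP1.sub hI2) (hI2.mconv hP1), mft_sub (hQ2.sub hR1) (hQ2.mconv hR1),
        mft_sub hP1 hI2, mft_sub hQ2 hR1, mft_mconv hI2 hP1, mft_mconv hQ2 hR1]
      exact hmain_alg (hinv2 w) (hR w) (hG w))
  have hc1 := hawkesPsi_causal hΦ₁.2.2.2
  have hc2 := hawkesPsi_causal hΦ₂.2.2.2
  have hzero : ∀ᵐ t : ℝ, hawkesPsi D Φ₁ t - Φ₂ t - mconv D Φ₂ (hawkesPsi D Φ₁) t =
      (fun _ => 0 : ℝ → Matrix (Fin D) (Fin D) ℝ) t := by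
    filter_upwards [hkey, Measure.ae_ne volume (0 : ℝ)] with t ht ht0
    rcases lt_or_gt_of_ne ht0 with h | h
    · rw [hc1 t h, hΦ₂.2.2.2 t h, mconv_causal hΦ₂.2.2.2 hc1 t h]; simp
    · rw [ht, mrefl_anticausal S hc2 t h, mrefl_anticausal S hΦ₁.2.2.2 t h,
        mconv_anticausal (mrefl_anticausal S hc2) (mrefl_anticausal S hΦ₁.2.2.2) t h]; simp
  refine mft_inj hI1 hI2 fun w => ?_
  have h0 := mft_congr hzero w
  rw [mft_sub (hP1.sub hI2) (hI2.mconv hP1), mft_sub hP1 hI2, mft_mconv hI2 hP1] at h0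
  have hz : mft D (fun _ => 0 : ℝ → Matrix (Fin D) (Fin D) ℝ) w = 0 := by
    ext i j; simp [mft, hft]
  rw [hz] at h0
  have h1 : (1 - mft D Φ₂ w) * (1 + mft D (hawkesPsi D Φ₁) w) = 1 := by
    calc _ = 1 + (mft D (hawkesPsi D Φ₁) w - mft D Φ₂ w -
          mft D Φ₂ w * mft D (hawkesPsi D Φ₁) w) := by noncomm_ring
      _ = 1 := by rw [h0, add_zero]
  have h2 := left_inv_eq_right_inv h1 (mul_eq_one_comm.1 (hinv1 w))
  exact (sub_right_injective h2).symm
end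

section
/- Let Φ be a Hawkes kernel matrix satisfying hypothesis (H), Ψ = Σ_{k=1}^∞ Φ^{⋆k}, Σ a diagonal D×D matrix with strictly positive diagonal entries, and let g be the associated conditional-expectation matrix. Then for every purely imaginary z (Re(z) = 0), the matrix I + ĝ(z) is invertible and its inverse is given explicitly by (I + ĝ(z))^{−1} = Σ (I − Φ̂(−z)ᵀ) Σ^{−1} (I − Φ̂(z)). -/
open MeasureTheory Matrix Filter Set

/-! ### Helper lemmas -/

lemma norm_exp_aux {z : ℂ} (hz : z.re = 0) (t : ℝ) : ‖Complex.exp (z * t)‖ = 1 := by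
  rw [Complex.norm_exp]; simp [hz]

lemma integrable_mul_exp {z : ℂ} (hz : z.re = 0) {f : ℝ → ℝ} (hf : Integrable f) :
    Integrable (fun t : ℝ => (f t : ℂ) * Complex.exp (z * t)) := by
  refine Integrable.mul_bdd (c := 1) hf.ofReal ?_ ?_
  · exact Continuous.aestronglyMeasurable (by fun_prop)
  · exact Eventually.of_forall fun t => (norm_exp_aux hz t).le

lemma conv_integrable {f g : ℝ → ℝ} (hf : Integrable f) (hg : Integrable g) :
    Integrable (fun t : ℝ => ∫ s : ℝ, f s * g (t - s)) :=
  Integrable.integrable_convolution (ContinuousLinearMap.mul ℝ ℝ) hf hg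

lemma conv_laplace {z : ℂ} (hz : z.re = 0) {f g : ℝ → ℝ} (hf : Integrable f)
    (hg : Integrable g) :
    ∫ t : ℝ, ((∫ s : ℝ, f s * g (t - s) : ℝ) : ℂ) * Complex.exp (z * t) =
      (∫ t : ℝ, (f t : ℂ) * Complex.exp (z * t)) * ∫ t : ℝ, (g t : ℂ) * Complex.exp (z * t) := by
  have h := integral_convolution (μ := volume) (ν := volume) (ContinuousLinearMap.mul ℝ ℂ)
    (integrable_mul_exp hz hf) (integrable_mul_exp hz hg)
  rw [ContinuousLinearMap.mul_apply'] at h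
  rw [← h]
  congr 1
  ext t
  rw [convolution_def, ← integral_complex_ofReal, ← integral_mul_const]
  congr 1
  ext s
  rw [ContinuousLinearMap.mul_apply']
  have : Complex.exp (z * t) = Complex.exp (z * s) * Complex.exp (z * ((t - s : ℝ) : ℂ)) := by
    rw [← Complex.exp_add]; congr 1; push_cast; ring
  rw [this]; push_cast; ring

lemma mconv_integrable {D : ℕ} {A B : ℝ → Matrix (Fin D) (Fin D) ℝ}
    (hA : ∀ i j, Integrable fun t => A t i j) (hB : ∀ i j, Integrable fun t => B t i j) (i j) :
    Integrable fun t => mconv D A B t i j := by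
  simp only [mconv, Matrix.of_apply]
  exact integrable_finsetSum _ fun k _ => conv_integrable (hA i k) (hB k j)

lemma mconv_laplace {D : ℕ} {A B : ℝ → Matrix (Fin D) (Fin D) ℝ} {z : ℂ} (hz : z.re = 0)
    (hA : ∀ i j, Integrable fun t => A t i j) (hB : ∀ i j, Integrable fun t => B t i j) :
    mlaplace D (mconv D A B) z = mlaplace D A z * mlaplace D B z := by
  ext i j
  simp only [mlaplace, mconv, Matrix.of_apply, Matrix.mul_apply, Complex.ofReal_sum,
    Finset.sum_mul]
  rw [integral_finsetSum]
  · exact Finset.sum_congr rfl fun k _ => conv_laplace hz (hA i k) (hB k j)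
  · intro k _
    exact integrable_mul_exp hz (conv_integrable (hA i k) (hB k j))

lemma iter_integrable {D : ℕ} {Φ : ℝ → Matrix (Fin D) (Fin D) ℝ}
    (hΦ : ∀ i j, Integrable fun t => Φ t i j) (k : ℕ) :
    ∀ i j, Integrable fun t => mconvIter D Φ k t i j := by
  induction k with
  | zero => exact hΦ
  | succ k ih => exact mconv_integrable hΦ ih

lemma iter_nonneg {D : ℕ} {Φ : ℝ → Matrix (Fin D) (Fin D) ℝ}
    (hΦ : ∀ t, ∀ i j, 0 ≤ Φ t i j) (k : ℕ) :
    ∀ t, ∀ i j, 0 ≤ mconvIter D Φ k t i j := by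
  induction k with
  | zero => exact hΦ
  | succ k ih =>
    intro t i j
    simp only [mconvIter, mconv, Matrix.of_apply]
    exact Finset.sum_nonneg fun l _ => integral_nonneg fun s => mul_nonneg (hΦ _ _ _) (ih _ _ _)

lemma iter_laplace {D : ℕ} {Φ : ℝ → Matrix (Fin D) (Fin D) ℝ} {z : ℂ} (hz : z.re = 0)
    (hΦ : ∀ i j, Integrable fun t => Φ t i j) (k : ℕ) :
    mlaplace D (mconvIter D Φ k) z = mlaplace D Φ z ^ (k + 1) := by
  induction k with
  | zero => simp [mconvIter]
  | succ k ih =>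
    rw [mconvIter, mconv_laplace hz hΦ (iter_integrable hΦ k), ih, ← pow_succ']

section
attribute [local instance] Matrix.linftyOpNormedRing Matrix.linftyOpNormedAlgebra

lemma summable_entries_of_spectralRadius {D : ℕ} (M : Matrix (Fin D) (Fin D) ℂ)
    (hM : spectralRadius ℂ M < 1) (i j : Fin D) : Summable fun k : ℕ => ‖(M ^ k) i j‖ := by
  have hlim := spectrum.pow_nnnorm_pow_one_div_tendsto_nhds_spectralRadius M
  obtain ⟨r, hr1, hr2⟩ := ENNReal.lt_iff_exists_nnreal_btwn.1 hM
  have hr2' : (r : ℝ) < 1 := by exact_mod_cast hr2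
  have hev := hlim.eventually_lt_const hr1
  have hgeo : Summable fun k : ℕ => (r : ℝ) ^ k := summable_geometric_of_lt_one r.2 hr2'
  refine Summable.of_norm_bounded_eventually_nat hgeo ?_
  filter_upwards [hev, eventually_gt_atTop 0] with n hn hn0
  have h1 : (‖M ^ n‖₊ : ENNReal) ≤ (r : ENNReal) ^ n := by
    have := ENNReal.rpow_le_rpow hn.le (Nat.cast_nonneg (α := ℝ) n)
    rw [← ENNReal.rpow_mul, one_div, inv_mul_cancel₀ (by positivity), ENNReal.rpow_one,
      ENNReal.rpow_natCast] at this
    exact this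
  have h2 : ‖M ^ n‖₊ ≤ r ^ n := by exact_mod_cast h1
  have h3 : ‖(M ^ n) i j‖₊ ≤ ‖M ^ n‖₊ := by
    rw [Matrix.linfty_opNNNorm_def]
    refine le_trans ?_ (Finset.le_sup (f := fun i => ∑ j, ‖(M ^ n) i j‖₊) (Finset.mem_univ i))
    exact Finset.single_le_sum (f := fun j => ‖(M ^ n) i j‖₊) (fun _ _ => zero_le)
      (Finset.mem_univ j)
  rw [norm_norm]
  exact_mod_cast h3.trans h2
end

lemma kernelNorm_eq {D : ℕ} (Φ : ℝ → Matrix (Fin D) (Fin D) ℝ) :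
    (kernelNorm D Φ).map Complex.ofReal = mlaplace D Φ 0 := by
  ext i j
  simp [kernelNorm, mlaplace, integral_complex_ofReal]

lemma iter_summable {D : ℕ} {Φ : ℝ → Matrix (Fin D) (Fin D) ℝ}
    (hΦ : IsHawkesKernel D Φ) (hH : HypothesisH D Φ) (i j : Fin D) :
    Summable fun k : ℕ => ∫ t : ℝ, mconvIter D Φ k t i j := by
  obtain ⟨-, hn, hi, -⟩ := hΦ
  have h := (summable_nat_add_iff 1).2 (summable_entries_of_spectralRadius _ hH i j)
  refine h.congr fun k => ?_
  rw [kernelNorm_eq, ← iter_laplace (by simp) hi]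
  simp only [mlaplace, Matrix.of_apply, zero_mul, Complex.exp_zero, mul_one]
  rw [integral_complex_ofReal, Complex.norm_real, Real.norm_of_nonneg]
  exact integral_nonneg fun t => iter_nonneg hn k t i j

lemma psi_integrable {D : ℕ} {Φ : ℝ → Matrix (Fin D) (Fin D) ℝ}
    (hΦ : IsHawkesKernel D Φ) (hH : HypothesisH D Φ) (i j : Fin D) :
    Integrable fun t => hawkesPsi D Φ t i j := by
  have hs := iter_summable hΦ hH i j
  obtain ⟨-, hn, hi, -⟩ := hΦ
  have hfun : (fun t => hawkesPsi D Φ t i j) =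
      fun t => (∑' k, ENNReal.ofReal (mconvIter D Φ k t i j)).toReal := by
    ext t
    rw [ENNReal.tsum_toReal_eq (fun _ => ENNReal.ofReal_ne_top)]
    simp only [hawkesPsi, Matrix.of_apply]
    exact tsum_congr fun k => (ENNReal.toReal_ofReal (iter_nonneg hn k t i j)).symm
  have hm : ∀ k, AEMeasurable fun t => ENNReal.ofReal (mconvIter D Φ k t i j) := fun k =>
    (iter_integrable hi k i j).aestronglyMeasurable.aemeasurable.ennreal_ofReal
  rw [hfun]
  refine integrable_toReal_of_lintegral_ne_top (AEMeasurable.tsum hm) ?_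
  rw [lintegral_tsum hm]
  have : ∀ k, ∫⁻ t, ENNReal.ofReal (mconvIter D Φ k t i j) =
      ENNReal.ofReal (∫ t, mconvIter D Φ k t i j) := fun k =>
    (ofReal_integral_eq_lintegral_ofReal (iter_integrable hi k i j)
      (Eventually.of_forall fun t => iter_nonneg hn k t i j)).symm
  simp only [this]
  exact hs.tsum_ofReal_ne_top

lemma psi_hasSum {D : ℕ} {Φ : ℝ → Matrix (Fin D) (Fin D) ℝ}
    (hΦ : IsHawkesKernel D Φ) (hH : HypothesisH D Φ) {z : ℂ} (hz : z.re = 0) :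
    HasSum (fun k : ℕ => mlaplace D Φ z ^ (k + 1)) (mlaplace D (hawkesPsi D Φ) z) := by
  have hs := iter_summable hΦ hH
  obtain ⟨-, hn, hi, -⟩ := hΦ
  refine Pi.hasSum.2 fun i => Pi.hasSum.2 fun j => ?_
  have h := hasSum_integral_of_summable_integral_norm (μ := volume)
    (F := fun (k : ℕ) (t : ℝ) => (mconvIter D Φ k t i j : ℂ) * Complex.exp (z * t))
    (fun k => integrable_mul_exp hz (iter_integrable hi k i j)) (by
      refine (hs i j).congr fun k => ?_
      congr 1
      ext t
      rw [norm_mul, norm_exp_aux hz, mul_one, Complex.norm_real,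
        Real.norm_of_nonneg (iter_nonneg hn k t i j)])
  have h1 : (fun k : ℕ => (mlaplace D Φ z ^ (k + 1)) i j) =
      fun k : ℕ => ∫ t : ℝ, (mconvIter D Φ k t i j : ℂ) * Complex.exp (z * t) := by
    funext k
    rw [← iter_laplace hz hi]
    rfl
  have h2 : mlaplace D (hawkesPsi D Φ) z i j =
      ∫ t : ℝ, ∑' k : ℕ, (mconvIter D Φ k t i j : ℂ) * Complex.exp (z * t) := by
    simp only [mlaplace, hawkesPsi, Matrix.of_apply, Complex.ofReal_tsum, tsum_mul_right]
  rw [← h1, ← h2] at h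
  exact h

lemma psi_inv {D : ℕ} {Φ : ℝ → Matrix (Fin D) (Fin D) ℝ}
    (hΦ : IsHawkesKernel D Φ) (hH : HypothesisH D Φ) {z : ℂ} (hz : z.re = 0) :
    (1 - mlaplace D Φ z) * (1 + mlaplace D (hawkesPsi D Φ) z) = 1 := by
  have h := psi_hasSum hΦ hH hz
  have h1 := h.mul_left (mlaplace D Φ z)
  have h2 := (hasSum_nat_add_iff' 1).2 h
  simp only [← pow_succ'] at h1
  have h3 := h1.unique h2
  simp only [Finset.range_one, Finset.sum_singleton, zero_add, pow_one] at h3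
  rw [sub_mul, one_mul, mul_add, h3]
  simp

lemma q_entry {D : ℕ} (Φ : ℝ → Matrix (Fin D) (Fin D) ℝ) (d : Fin D → ℝ) (hd : ∀ i, 0 < d i)
    (t : ℝ) (i j : Fin D) :
    hawkesQ D Φ (diagonal d) t i j = d i * (d j)⁻¹ * hawkesPsi D Φ (-t) j i := by
  have hinv : (diagonal d)⁻¹ = diagonal fun i => (d i)⁻¹ := by
    refine Matrix.inv_eq_right_inv ?_
    rw [diagonal_mul_diagonal, ← diagonal_one]
    congr 1; ext k; exact mul_inv_cancel₀ (hd k).ne'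
  rw [hawkesQ, hinv, mul_diagonal, diagonal_mul, transpose_apply]
  ring

lemma q_laplace {D : ℕ} (Φ : ℝ → Matrix (Fin D) (Fin D) ℝ) (d : Fin D → ℝ) (hd : ∀ i, 0 < d i)
    (z : ℂ) :
    mlaplace D (hawkesQ D Φ (diagonal d)) z =
      diagonal (fun i => (d i : ℂ)) * (mlaplace D (hawkesPsi D Φ) (-z))ᵀ *
        diagonal (fun i => (d i : ℂ)⁻¹) := by
  ext i j
  rw [mul_diagonal, diagonal_mul, transpose_apply]
  simp only [mlaplace, Matrix.of_apply, q_entry Φ d hd]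
  rw [← integral_neg_eq_self, ← integral_const_mul, ← integral_mul_const]
  congr 1
  ext t
  push_cast
  rw [neg_neg, mul_neg, neg_mul]
  ring

/-- On the imaginary axis, `I + ĝ(z)` is invertible with inverse
`Σ (I - Φ̂(-z)ᵀ) Σ⁻¹ (I - Φ̂(z))`. -/
theorem hawkesG_laplace_inverse (D : ℕ) (hD : 0 < D)
    (Φ : ℝ → Matrix (Fin D) (Fin D) ℝ)
    (hΦ : IsHawkesKernel D Φ) (hH : HypothesisH D Φ)
    (S : Matrix (Fin D) (Fin D) ℝ) (hSdiag : S.IsDiag) (hSpos : ∀ i, 0 < S i i) :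
    ∀ z : ℂ, z.re = 0 →
      IsUnit (1 + mlaplace D (hawkesG D Φ S) z) ∧
      (1 + mlaplace D (hawkesG D Φ S) z)⁻¹ =
        S.map Complex.ofReal * (1 - (mlaplace D Φ (-z))ᵀ) * (S.map Complex.ofReal)⁻¹ *
          (1 - mlaplace D Φ z) := by
  intro z hz
  obtain ⟨d, rfl⟩ : ∃ d, S = Matrix.diagonal d := ⟨S.diag, hSdiag.diagonal_diag.symm⟩
  have hd : ∀ i, 0 < d i := fun i => by simpa using hSpos i
  have hz' : (-z).re = 0 := by simp [hz]
  have hP := psi_integrable hΦ hH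
  have hQ : ∀ i j, Integrable fun t => hawkesQ D Φ (Matrix.diagonal d) t i j := by
    intro i j
    simp only [q_entry Φ d hd]
    exact (hP j i).comp_neg.const_mul _
  have hmap : (Matrix.diagonal d).map Complex.ofReal = Matrix.diagonal (fun i => (d i : ℂ)) := by
    rw [diagonal_map (by simp)]
  have hSS : Matrix.diagonal (fun i => (d i : ℂ)) * Matrix.diagonal (fun i => (d i : ℂ)⁻¹) = 1 := by
    rw [diagonal_mul_diagonal, ← diagonal_one]
    congr 1; ext k; exact mul_inv_cancel₀ (by exact_mod_cast (hd k).ne')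
  have hSS' := mul_eq_one_comm.1 hSS
  have hg : mlaplace D (hawkesG D Φ (Matrix.diagonal d)) z = mlaplace D (hawkesPsi D Φ) z +
      mlaplace D (hawkesQ D Φ (Matrix.diagonal d)) z +
      mlaplace D (hawkesPsi D Φ) z * mlaplace D (hawkesQ D Φ (Matrix.diagonal d)) z := by
    rw [← mconv_laplace hz hP hQ]
    ext i j
    simp only [mlaplace, hawkesG, Matrix.of_apply, Matrix.add_apply, Complex.ofReal_add, add_mul]
    have i1 := integrable_mul_exp hz (hP i j)
    have i2 := integrable_mul_exp hz (hQ i j)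
    have i3 := integrable_mul_exp hz (mconv_integrable hP hQ i j)
    exact (integral_add (i1.add i2) i3).trans (congrArg (· + _) (integral_add i1 i2))
  rw [hmap, Matrix.inv_eq_right_inv hSS, hg, q_laplace Φ d hd]
  have e1 := mul_eq_one_comm.1 (psi_inv hΦ hH hz)
  have e2 := congrArg Matrix.transpose (psi_inv hΦ hH hz')
  rw [transpose_mul, transpose_one, transpose_sub, transpose_add, transpose_one] at e2
  generalize mlaplace D (hawkesPsi D Φ) z = P at *
  generalize (mlaplace D (hawkesPsi D Φ) (-z))ᵀ = P' at *
  generalize mlaplace D Φ z = F at *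
  generalize (mlaplace D Φ (-z))ᵀ = F' at *
  generalize Matrix.diagonal (fun i => (d i : ℂ)) = T at *
  generalize Matrix.diagonal (fun i => (d i : ℂ)⁻¹) = T' at *
  have key : (1 + (P + T * P' * T' + P * (T * P' * T'))) * (T * (1 - F') * T' * (1 - F)) = 1 := by
    have h0 : 1 + (P + T * P' * T' + P * (T * P' * T')) = (1 + P) * (T * (1 + P') * T') := by
      have : T * (1 + P') * T' = 1 + T * P' * T' := by rw [mul_add, add_mul, mul_one, hSS]
      rw [this]; noncomm_ring
    calc _ = (1 + P) * (T * ((1 + P') * ((T' * T) * (1 - F'))) * T') * (1 - F) := by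
          rw [h0]; simp only [mul_assoc]
      _ = 1 := by rw [hSS', one_mul, e2, mul_one, hSS, mul_one, e1]
  exact ⟨IsUnit.of_mul_eq_one _ key, Matrix.inv_eq_right_inv key⟩
end
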